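/- arXiv:2305.02749 — 3 statements merged into one kernel-verified Lean document; each statement's English description precedes it below -/
import Mathlib

section
/- Let A, B, C, D, E, V be finite nonempty types and let p be a probability mass function with full support on A × B × C × D × E × V. Assume: (i) for all a, b, c, d, e, v, p(v | a,b,c,d,e) = p(v | a,b,c) (the ground-truth parents of V are exactly the A-, B-, C-coordinates); (ii) for all a, d, v, p(v | a,d) = p(v | a) (the false parent D carries no information about V beyond A); and (iii) for all a, b, d, e, v, p(v | a,b,d,e) = p(v | a,b) (the false parents D and E carry no information about V beyond A and B). Then the expected KL divergence from the ground-truth posterior to the prediction using the smaller parent set {A,D} is at least that using the larger parent set {A,B,D,E}: Σ_{a,b,c,d,e} p(a,b,c,d,e) · KL(p(·|a,b,c) ‖ p(·|a,d)) ≥ Σ_{a,b,c,d,e} p(a,b,c,d,e) · KL(p(·|a,b,c) ‖ p(·|a,b,d,e)). -/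
open Finset

variable {A B C D E V : Type*} [Fintype A] [Fintype B] [Fintype C] [Fintype D] [Fintype E]
  [Fintype V]

/-- the joint marginal `p(a,b,c,d,e)` -/
noncomputable def margABCDE (p : A × B × C × D × E × V → ℝ) (a : A) (b : B) (c : C) (d : D)
    (e : E) : ℝ :=
  ∑ v, p (a, b, c, d, e, v)

/-- the conditional `p(v|a,b,c,d,e)` -/
noncomputable def condABCDE (p : A × B × C × D × E × V → ℝ) (a : A) (b : B) (c : C) (d : D)
    (e : E) (v : V) : ℝ :=
  p (a, b, c, d, e, v) / ∑ v', p (a, b, c, d, e, v')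

/-- the conditional `p(v|a,b,c)` -/
noncomputable def condABC (p : A × B × C × D × E × V → ℝ) (a : A) (b : B) (c : C) (v : V) : ℝ :=
  (∑ d, ∑ e, p (a, b, c, d, e, v)) / ∑ d, ∑ e, ∑ v', p (a, b, c, d, e, v')

/-- the conditional `p(v|a,d)` -/
noncomputable def condAD (p : A × B × C × D × E × V → ℝ) (a : A) (d : D) (v : V) : ℝ :=
  (∑ b, ∑ c, ∑ e, p (a, b, c, d, e, v)) / ∑ b, ∑ c, ∑ e, ∑ v', p (a, b, c, d, e, v')

/-- the conditional `p(v|a)` -/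
noncomputable def condA (p : A × B × C × D × E × V → ℝ) (a : A) (v : V) : ℝ :=
  (∑ b, ∑ c, ∑ d, ∑ e, p (a, b, c, d, e, v)) /
    ∑ b, ∑ c, ∑ d, ∑ e, ∑ v', p (a, b, c, d, e, v')

/-- the conditional `p(v|a,b,d,e)` -/
noncomputable def condABDE (p : A × B × C × D × E × V → ℝ) (a : A) (b : B) (d : D) (e : E)
    (v : V) : ℝ :=
  (∑ c, p (a, b, c, d, e, v)) / ∑ c, ∑ v', p (a, b, c, d, e, v')

/-- the conditional `p(v|a,b)` -/
noncomputable def condAB (p : A × B × C × D × E × V → ℝ) (a : A) (b : B) (v : V) : ℝ :=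
  (∑ c, ∑ d, ∑ e, p (a, b, c, d, e, v)) / ∑ c, ∑ d, ∑ e, ∑ v', p (a, b, c, d, e, v')

/-- the interpretability–accuracy trade-off. If the ground-truth parents of `V`
are the `A`, `B`, `C` coordinates, and the false parents `D` (resp. `D` and `E`) carry no
information about `V` beyond `A` (resp. beyond `A` and `B`), then predicting with the
smaller parent set `{A, D}` incurs at least as large an expected KL divergence from the
ground-truth posterior `p(·|a,b,c)` as predicting with the larger set `{A, B, D, E}`. -/
theorem interpretability_accuracy_tradeoff
    [Nonempty A] [Nonempty B] [Nonempty C] [Nonempty D] [Nonempty E] [Nonempty V]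
    (p : A × B × C × D × E × V → ℝ)
    (hpos : ∀ x, 0 < p x)
    (hsum : ∑ x, p x = 1)
    (hparents : ∀ a b c d e v, condABCDE p a b c d e v = condABC p a b c v)
    (hAD : ∀ a d v, condAD p a d v = condA p a v)
    (hABDE : ∀ a b d e v, condABDE p a b d e v = condAB p a b v) :
    (∑ a, ∑ b, ∑ c, ∑ d, ∑ e, margABCDE p a b c d e *
        ∑ v, condABC p a b c v * Real.log (condABC p a b c v / condAD p a d v))
      ≥ ∑ a, ∑ b, ∑ c, ∑ d, ∑ e, margABCDE p a b c d e *
        ∑ v, condABC p a b c v * Real.log (condABC p a b c v / condABDE p a b d e v) := by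
  have hm : ∀ a b c d e, 0 < margABCDE p a b c d e := fun a b c d e =>
    Finset.sum_pos (fun v _ => hpos _) Finset.univ_nonempty
  have hP : ∀ a b c d e v, margABCDE p a b c d e * condABC p a b c v = p (a, b, c, d, e, v) := by
    intro a b c d e v
    rw [← hparents a b c d e v]
    exact mul_div_cancel₀ _ (hm a b c d e).ne'
  have hPpos : ∀ a b c v, 0 < condABC p a b c v := by
    intro a b c v
    obtain ⟨d⟩ := ‹Nonempty D›
    obtain ⟨e⟩ := ‹Nonempty E›
    have h := hpos (a, b, c, d, e, v)
    rw [← hP] at h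
    exact (mul_pos_iff_of_pos_left (hm a b c d e)).1 h
  have hADpos : ∀ a d v, 0 < condAD p a d v := by
    intro a d v
    refine div_pos ?_ ?_ <;>
    · repeat (first | exact hpos _ | refine Finset.sum_pos (fun _ _ => ?_) Finset.univ_nonempty)
  have hQpos : ∀ a b d e, 0 < ∑ c, ∑ v', p (a, b, c, d, e, v') := by
    intro a b d e
    repeat (first | exact hpos _ | refine Finset.sum_pos (fun _ _ => ?_) Finset.univ_nonempty)
  have hNpos : ∀ a b d e v, 0 < ∑ c, p (a, b, c, d, e, v) := by
    intro a b d e v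
    repeat (first | exact hpos _ | refine Finset.sum_pos (fun _ _ => ?_) Finset.univ_nonempty)
  have hABDEpos : ∀ a b d e v, 0 < condABDE p a b d e v := by
    intro a b d e v
    exact div_pos (hNpos a b d e v) (hQpos a b d e)
  have hADsum : ∀ a d, ∑ v, condAD p a d v = 1 := by
    intro a d
    unfold condAD
    rw [← Finset.sum_div]
    have h : ∑ v, ∑ b, ∑ c, ∑ e, p (a, b, c, d, e, v)
        = ∑ b, ∑ c, ∑ e, ∑ v, p (a, b, c, d, e, v) := by
      rw [Finset.sum_comm]
      refine Finset.sum_congr rfl fun b _ => ?_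
      rw [Finset.sum_comm]
      refine Finset.sum_congr rfl fun c _ => ?_
      rw [Finset.sum_comm]
    rw [h]
    refine div_self (ne_of_gt ?_)
    repeat (first | exact hpos _ | refine Finset.sum_pos (fun _ _ => ?_) Finset.univ_nonempty)
  have key : ∀ a b d e, ∑ c, margABCDE p a b c d e *
        ∑ v, condABC p a b c v * Real.log (condABC p a b c v / condABDE p a b d e v)
      ≤ ∑ c, margABCDE p a b c d e *
        ∑ v, condABC p a b c v * Real.log (condABC p a b c v / condAD p a d v) := by
    intro a b d e
    have hz : ∑ c, ∑ v, p (a, b, c, d, e, v) * (1 - condAD p a d v / condABDE p a b d e v) = 0 := by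
      rw [Finset.sum_comm]
      have : ∀ v, ∑ c, p (a, b, c, d, e, v) * (1 - condAD p a d v / condABDE p a b d e v)
          = ∑ c, p (a, b, c, d, e, v) - (∑ c, ∑ v', p (a, b, c, d, e, v')) * condAD p a d v := by
        intro v
        rw [← Finset.sum_mul]
        have h1 := (hNpos a b d e v).ne'
        have h2 := (hQpos a b d e).ne'
        unfold condABDE
        field_simp
      simp_rw [this]
      rw [Finset.sum_sub_distrib, ← Finset.mul_sum, hADsum, Finset.sum_comm]
      ring
    rw [← sub_nonneg, ← Finset.sum_sub_distrib, ← hz]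
    refine Finset.sum_le_sum fun c _ => ?_
    rw [← mul_sub, ← Finset.sum_sub_distrib, Finset.mul_sum]
    refine Finset.sum_le_sum fun v _ => ?_
    rw [← mul_sub, ← mul_assoc, hP]
    refine mul_le_mul_of_nonneg_left ?_ (hpos _).le
    have x := hPpos a b c v
    have y := hADpos a d v
    have z := hABDEpos a b d e v
    rw [Real.log_div x.ne' y.ne', Real.log_div x.ne' z.ne']
    have := Real.log_le_sub_one_of_pos (div_pos y z)
    rw [Real.log_div y.ne' z.ne'] at this
    linarith
  have comm : ∀ f : B → C → D → E → ℝ, ∀ b, ∑ c, ∑ d, ∑ e, f b c d e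
      = ∑ d, ∑ e, ∑ c, f b c d e := by
    intro f b
    rw [Finset.sum_comm]
    refine Finset.sum_congr rfl fun d _ => ?_
    rw [Finset.sum_comm]
  refine Finset.sum_le_sum fun a _ => Finset.sum_le_sum fun b _ => ?_
  rw [comm (fun b c d e => margABCDE p a b c d e *
        ∑ v, condABC p a b c v * Real.log (condABC p a b c v / condABDE p a b d e v)) b,
    comm (fun b c d e => margABCDE p a b c d e *
        ∑ v, condABC p a b c v * Real.log (condABC p a b c v / condAD p a d v)) b]
  exact Finset.sum_le_sum fun d _ => Finset.sum_le_sum fun e _ => key a b d e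
end

section
/- Let U, W, V be finite nonempty types and let p and p* be probability mass functions with full support on U × W × V that share the same conditional kernel: p(v | u, w) = p*(v | u, w) for all u, w, v. Then V is conditionally independent of U given W under p if and only if V is conditionally independent of U given W under p*; that is, (∀ u w v, p(v | u, w) = p(v | w)) ↔ (∀ u w v, p*(v | u, w) = p*(v | w)). -/
open Finset

variable {U W V : Type*} [Fintype U] [Fintype W] [Fintype V]

/-- the conditional kernel `q(v | u, w)` -/
noncomputable def condUW (q : U × W × V → ℝ) (u : U) (w : W) (v : V) : ℝ :=
  q (u, w, v) / ∑ v', q (u, w, v')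

/-- the conditional marginal `q(v | w)` -/
noncomputable def condW (q : U × W × V → ℝ) (w : W) (v : V) : ℝ :=
  (∑ u, q (u, w, v)) / ∑ u, ∑ v', q (u, w, v')

theorem aux_dir [Nonempty U] [Nonempty V] (q : U × W × V → ℝ) (hq : ∀ x, 0 < q x)
    (w : W) (v : V) (c : ℝ) (h : ∀ u, condUW q u w v = c) : condW q w v = c := by
  have hpos : ∀ u, 0 < ∑ v', q (u, w, v') := fun u =>
    Finset.sum_pos (fun _ _ => hq _) Finset.univ_nonempty
  have hpos2 : 0 < ∑ u, ∑ v', q (u, w, v') :=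
    Finset.sum_pos (fun u _ => hpos u) Finset.univ_nonempty
  unfold condW
  rw [div_eq_iff hpos2.ne', Finset.mul_sum]
  refine Finset.sum_congr rfl fun u _ => ?_
  have := h u
  unfold condUW at this
  exact (div_eq_iff (hpos u).ne').1 this

/-- if two full-support pmfs `p` and `p⋆` on `U × W × V` share the same
conditional kernel `p(v|u,w) = p⋆(v|u,w)`, then `V` is conditionally independent of `U`
given `W` under `p` if and only if it is under `p⋆`. -/
theorem cond_indep_invariance
    [Nonempty U] [Nonempty W] [Nonempty V]
    (p pstar : U × W × V → ℝ)
    (hppos : ∀ x, 0 < p x) (hpsum : ∑ x, p x = 1)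
    (hspos : ∀ x, 0 < pstar x) (hssum : ∑ x, pstar x = 1)
    (hkernel : ∀ u w v, condUW p u w v = condUW pstar u w v) :
    (∀ u w v, condUW p u w v = condW p w v) ↔
      (∀ u w v, condUW pstar u w v = condW pstar w v) := by
  constructor
  · intro h u w v
    rw [aux_dir pstar hspos w v (condW p w v) (fun u' => by rw [← hkernel, h])]
    rw [← hkernel, h]
  · intro h u w v
    rw [aux_dir p hppos w v (condW pstar w v) (fun u' => by rw [hkernel, h])]
    rw [hkernel, h]
end

section
/- Let I be a finite index set, let (X_i)_{i∈I} and V be finite nonempty types, and let p and p* be probability mass functions with full support on (Π_{i∈I} X_i) × V that share the same conditional kernel: p(v | x) = p*(v | x) for all x ∈ Π_{i∈I} X_i and v ∈ V. For a pmf q, define the parent set PA_q(V) = { i ∈ I : ¬(∀ x v, q(v | x) = q(v | x_{-i})) }, where x_{-i} denotes the coordinates of x other than i and q(v | x_{-i}) is the conditional probability of V given those coordinates. Then PA_p(V) = PA_{p*}(V). -/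
open Finset

variable {I : Type*} [Fintype I] [DecidableEq I] {X : I → Type*} [∀ i, Fintype (X i)]
  [∀ i, DecidableEq (X i)] {V : Type*} [Fintype V]

/-- the joint weight of `(x_S, v)`: the marginal of `q` on the coordinates in `S`
together with `V`, evaluated at the restriction of `x` to `S` and at `v` -/
noncomputable def margS (q : (∀ i, X i) × V → ℝ) (S : Finset I) (x : ∀ i, X i) (v : V) : ℝ :=
  ∑ y : ∀ i, X i, if ∀ i ∈ S, y i = x i then q (y, v) else 0

/-- the conditional `q(v | x_{-i})`: the conditional probability of `V` given all
coordinates of `x` other than `i` -/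
noncomputable def condMinus (q : (∀ i, X i) × V → ℝ) (i : I) (x : ∀ i, X i) (v : V) : ℝ :=
  margS q (Finset.univ.erase i) x v / ∑ v', margS q (Finset.univ.erase i) x v'

/-- the conditional `q(v | x)` given all input coordinates -/
noncomputable def condAll (q : (∀ i, X i) × V → ℝ) (x : ∀ i, X i) (v : V) : ℝ :=
  q (x, v) / ∑ v', q (x, v')

/-- the parent set of `V` under `q`: the set of indices `i` such that `V` is *not*
conditionally independent of the `i`-th coordinate given the remaining coordinates -/
def parentSet (q : (∀ i, X i) × V → ℝ) : Set I :=
  { i : I | ¬ ∀ (x : ∀ i, X i) (v : V), condAll q x v = condMinus q i x v }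

theorem condInd_iff_aux [Nonempty V] (q : (∀ i, X i) × V → ℝ) (hq : ∀ z, 0 < q z) (i : I) :
    (∀ (x : ∀ i, X i) (v : V), condAll q x v = condMinus q i x v) ↔
    ∀ (x y : ∀ i, X i) (v : V), (∀ j ∈ Finset.univ.erase i, y j = x j) →
      condAll q y v = condAll q x v := by
  constructor
  · intro h x y v hxy
    rw [h, h]
    have hm : ∀ w, margS q (Finset.univ.erase i) y w = margS q (Finset.univ.erase i) x w := by
      intro w
      unfold margS
      refine Finset.sum_congr rfl fun z _ => ?_
      refine if_congr ?_ rfl rfl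
      exact forall₂_congr fun j hj => by rw [hxy j hj]
    simp only [condMinus, hm]
  · intro h x v
    have hQ : ∀ y, 0 < ∑ v', q (y, v') := fun y =>
      Finset.sum_pos (fun v' _ => hq _) Finset.univ_nonempty
    set M : ℝ := ∑ y : ∀ i, X i,
      if ∀ j ∈ Finset.univ.erase i, y j = x j then ∑ v', q (y, v') else 0 with hM
    have hMpos : 0 < M := by
      refine Finset.sum_pos' (fun y _ => ?_) ⟨x, Finset.mem_univ _, ?_⟩
      · split_ifs
        · exact (hQ y).le
        · exact le_rfl
      · rw [if_pos (fun _ _ => rfl)]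
        exact hQ x
    have h1 : margS q (Finset.univ.erase i) x v = condAll q x v * M := by
      rw [hM, Finset.mul_sum]
      unfold margS
      refine Finset.sum_congr rfl fun y _ => ?_
      split_ifs with hy
      · rw [← h x y v hy, condAll, div_mul_cancel₀ _ (hQ y).ne']
      · simp
    have h2 : ∑ v', margS q (Finset.univ.erase i) x v' = M := by
      rw [hM]
      unfold margS
      rw [Finset.sum_comm]
      refine Finset.sum_congr rfl fun y _ => ?_
      split_ifs <;> simp
    rw [condMinus, h1, h2, mul_div_cancel_right₀ _ hMpos.ne']

/-- if two full-support pmfs `p` and `p⋆` on `(Π i, X i) × V` share the same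
conditional kernel `p(v|x) = p⋆(v|x)`, then the parent sets of `V` identified by the
conditional-independence rule coincide: `PA_p(V) = PA_{p⋆}(V)`. -/
theorem parent_set_invariance
    [∀ i, Nonempty (X i)] [Nonempty V]
    (p pstar : (∀ i, X i) × V → ℝ)
    (hppos : ∀ z, 0 < p z) (hpsum : ∑ z, p z = 1)
    (hspos : ∀ z, 0 < pstar z) (hssum : ∑ z, pstar z = 1)
    (hkernel : ∀ x v, condAll p x v = condAll pstar x v) :
    parentSet p = parentSet pstar := by
  ext i
  simp only [parentSet, Set.mem_setOf_eq]
  rw [condInd_iff_aux p hppos i, condInd_iff_aux pstar hspos i]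
  simp only [hkernel]
end
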